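/- The operator H' is a contraction with modulus γ in the sup norm: for all q₁, q₂ : S → Act → ℝ, ‖H' q₁ − H' q₂‖∞ ≤ γ · ‖q₁ − q₂‖∞. (This is the variant of Proposition 3 for formulas of the form G_{[0,T)}ψ, where the reward aggregation uses min instead of max; the paper asserts it is proven analogously.) -/

import Mathlib

/-! The operator is a composition of nonexpansive maps with one scaling by `γ`: the maximum over
actions is `1`-Lipschitz in the sup norm (`abs_ciSup_sub_ciSup_le`), multiplication by `γ` scales
distances by `γ`, `min (r σ) ·` is `1`-Lipschitz, and averaging against a probability vector does
not increase a uniform bound. -/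

lemma ciSup_le_ciSup_add {ι : Type*} [Finite ι] [Nonempty ι] {f g : ι → ℝ} {D : ℝ}
    (h : ∀ i, f i ≤ g i + D) : ⨆ i, f i ≤ (⨆ i, g i) + D :=
  ciSup_le fun i => (h i).trans <|
    add_le_add_left (le_ciSup (Set.finite_range g).bddAbove i) D

lemma abs_ciSup_sub_ciSup_le {ι : Type*} [Finite ι] [Nonempty ι] {f g : ι → ℝ} {D : ℝ}
    (h : ∀ i, |f i - g i| ≤ D) : |(⨆ i, f i) - ⨆ i, g i| ≤ D := by
  rw [abs_sub_le_iff]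
  constructor
  · have := ciSup_le_ciSup_add (f := f) (g := g) (D := D) fun i => by
      linarith [(abs_sub_le_iff.1 (h i)).1]
    linarith
  · have := ciSup_le_ciSup_add (f := g) (g := f) (D := D) fun i => by
      linarith [(abs_sub_le_iff.1 (h i)).2]
    linarith

/-- Variant of Proposition 3: the operator `H'` (min-aggregation) associated with maximizing
expected STL robustness for formulas `G_[0,T) ψ` is a `γ`-contraction in the
sup norm. -/
theorem stmt_1 {S Act : Type*} [Fintype S] [Fintype Act] [Nonempty S] [Nonempty Act]
    (P : S → Act → S → ℝ)
    (hP0 : ∀ σ a σ', 0 ≤ P σ a σ')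
    (hP1 : ∀ σ a, ∑ σ', P σ a σ' = 1)
    (r : S → ℝ) (γ : ℝ) (hγ0 : 0 < γ) (hγ1 : γ < 1)
    (H : (S → Act → ℝ) → S → Act → ℝ)
    (hH : ∀ q σ a, H q σ a = ∑ σ', P σ a σ' * min (r σ) (γ * ⨆ b, q σ' b))
    (q₁ q₂ : S → Act → ℝ) :
    (⨆ p : S × Act, |H q₁ p.1 p.2 - H q₂ p.1 p.2|) ≤
      γ * ⨆ p : S × Act, |q₁ p.1 p.2 - q₂ p.1 p.2| := by
  set D := ⨆ p : S × Act, |q₁ p.1 p.2 - q₂ p.1 p.2| with hD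
  have hq : ∀ s b, |q₁ s b - q₂ s b| ≤ D := fun s b =>
    le_ciSup (f := fun p : S × Act => |q₁ p.1 p.2 - q₂ p.1 p.2|)
      (Set.finite_range _).bddAbove (s, b)
  refine ciSup_le fun p => ?_
  -- Subtracting the two averages with the same weights leaves an average of differences.
  rw [hH, hH, ← Finset.sum_sub_distrib]
  calc |∑ s, (P p.1 p.2 s * min (r p.1) (γ * ⨆ b, q₁ s b)
          - P p.1 p.2 s * min (r p.1) (γ * ⨆ b, q₂ s b))|
      ≤ ∑ s, |P p.1 p.2 s * min (r p.1) (γ * ⨆ b, q₁ s b)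
          - P p.1 p.2 s * min (r p.1) (γ * ⨆ b, q₂ s b)| := Finset.abs_sum_le_sum_abs _ _
    _ ≤ ∑ s, P p.1 p.2 s * (γ * D) := by
        refine Finset.sum_le_sum fun s _ => ?_
        rw [← mul_sub, abs_mul, abs_of_nonneg (hP0 _ _ _)]
        refine mul_le_mul_of_nonneg_left ?_ (hP0 _ _ _)
        refine (abs_min_sub_min_le_max _ _ _ _).trans ?_
        rw [sub_self, abs_zero, max_eq_right (abs_nonneg _), ← mul_sub, abs_mul,
          abs_of_pos hγ0]
        exact mul_le_mul_of_nonneg_left (abs_ciSup_sub_ciSup_le (hq s)) hγ0.le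
    _ = γ * D := by rw [← Finset.sum_mul, hP1, one_mul]
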